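/- arXiv:2105.07124 — 2 statements merged into one kernel-verified Lean document; each statement's English description precedes it below -/
import Mathlib

section
/- Let f(t) = at⁴ + bt³ + ct² + dt + e with a > 0 and e > 0, and let Δ = 4(12ae − 3bd + c²)³ − (72ace + 9bcd − 2c³ − 27ad² − 27b²e)². Then f(t) ≥ 0 for all t > 0 if and only if one of the following holds: (1) Δ ≤ 0 and b√e + d√a > 0; or (2) b ≥ 0, d ≥ 0, and 2√(ae) + c ≥ 0; or (3) Δ ≥ 0, |b√e − d√a| ≤ 4√(ace + 2ae√(ae)), and either (i) −2√(ae) ≤ c ≤ 6√(ae), or (ii) c − 6√(ae) > 0 and b√e + d√a ≥ −4√(ace − 2ae√(ae)). -/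
/-!
Rescaling `t` and the coefficients reduces the theorem to the quartic `t⁴ + α t³ + β t² + γ t + 1`.
By Ferrari's method it splits over `ℝ` as `(t² + u x t + x²) (t² + v y t + y²)` with `x, y > 0` and
`x y = 1`. A factor is nonnegative on `(0, ∞)` exactly when its parameter `u` or `v` is at least
`-2`, and a factor with two positive roots must agree with the other one if the product is to be
nonnegative.
So the quartic is nonnegative on `(0, ∞)` if and only if `u, v ≥ -2` or the two factors are equal.
With `k = x² + y² ≥ 2` one has `α + γ = (u + v) (x + y)`, `(α ± γ)² = (u ± v)² (k ± 2)`,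
`β = k + u v`, and `Δ` is `27 (u² - 4) (v² - 4)` times the square of the resultant of the factors,
so that the conditions of the theorem become polynomial inequalities in `u`, `v` and `k`.
-/

open scoped Topology

theorem eq_zero_of_mul_nonneg_of_hasDerivAt {g h : ℝ → ℝ} {h' r : ℝ} (hg : DifferentiableAt ℝ g r)
    (hh : HasDerivAt h h' r) (hr : h r = 0) (hh' : h' ≠ 0) (hgh : ∀ᶠ t in 𝓝 r, 0 ≤ g t * h t) :
    g r = 0 := by
  have hmin : IsLocalMin (fun t => g t * h t) r :=
    hgh.mono fun t ht => by simpa only [hr, mul_zero] using ht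
  have hderiv := hmin.hasDerivAt_eq_zero (hg.hasDerivAt.fun_mul hh)
  simpa [hr, hh'] using hderiv

theorem exists_pos_lt_add_eq_mul_eq {S P : ℝ} (hS : 0 < S) (hP : 0 < P) (hSP : 4 * P < S ^ 2) :
    ∃ r s, 0 < r ∧ r < s ∧ r + s = S ∧ r * s = P := by
  have hsq := Real.sq_sqrt (sub_pos.mpr hSP).le
  have hpos := Real.sqrt_pos.mpr (sub_pos.mpr hSP)
  set q := √(S ^ 2 - 4 * P)
  have hqS : q < S := by nlinarith
  exact ⟨(S - q) / 2, (S + q) / 2, by linarith, by linarith, by ring,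
    by linear_combination -hsq / 4⟩

theorem abs_le_mul_sqrt_iff {m w z : ℝ} (hm : 0 ≤ m) (hw : 0 ≤ w) :
    |z| ≤ m * √w ↔ z ^ 2 ≤ m ^ 2 * w := by
  rw [← sq_le_sq₀ (abs_nonneg z) (by positivity), sq_abs, mul_pow, Real.sq_sqrt hw]

theorem neg_mul_sqrt_le_iff {m w z : ℝ} (hm : 0 ≤ m) (hw : 0 ≤ w) :
    -m * √w ≤ z ↔ 0 ≤ z ∨ z ^ 2 ≤ m ^ 2 * w := by
  have hmw : 0 ≤ m * √w := by positivity
  rw [← abs_le_mul_sqrt_iff hm hw, abs_le, neg_mul]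
  constructor
  · intro h
    exact (le_or_gt 0 z).imp_right fun hz => ⟨h, by linarith⟩
  · rintro (hz | hz)
    · linarith
    · exact hz.1

theorem sqrt_sq_mul {m : ℝ} (hm : 0 ≤ m) (z : ℝ) : √(m ^ 2 * z) = m * √z := by
  rw [Real.sqrt_mul (sq_nonneg m), Real.sqrt_sq hm]

theorem sq_add_mul_add_sq_nonneg {R : Type*} [CommRing R] [LinearOrder R] [IsStrictOrderedRing R]
    {u x t : R} (hx : 0 ≤ x) (hu : -2 ≤ u) (ht : 0 ≤ t) :
    0 ≤ t ^ 2 + u * x * t + x ^ 2 := by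
  have : 0 ≤ (t - x) ^ 2 + (u + 2) * (x * t) :=
    add_nonneg (sq_nonneg _) (mul_nonneg (by linarith) (mul_nonneg hx ht))
  linarith

/-- The quantity `Δ` of the theorem; it is `27` times the discriminant of
`a t⁴ + b t³ + c t² + d t + e`. -/
def quarticDisc {R : Type*} [CommRing R] (a b c d e : R) : R :=
  4 * (12 * a * e - 3 * b * d + c ^ 2) ^ 3 -
    (72 * a * c * e + 9 * b * c * d - 2 * c ^ 3 - 27 * a * d ^ 2 - 27 * b ^ 2 * e) ^ 2

theorem quarticDisc_scale {R : Type*} [CommRing R] (p q a b c d e : R) :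
    quarticDisc (p ^ 4 * a) (p ^ 3 * q * b) ((p * q) ^ 2 * c) (p * q ^ 3 * d) (q ^ 4 * e) =
      (p * q) ^ 12 * quarticDisc a b c d e := by
  unfold quarticDisc
  ring

/-- The Qi–Song–Zhang condition on the coefficients of a quartic, stated as a predicate so that its
invariance under scaling can be expressed. -/
def NonnegCriterion (a b c d e : ℝ) : Prop :=
  (quarticDisc a b c d e ≤ 0 ∧ 0 < b * √e + d * √a) ∨
    (0 ≤ b ∧ 0 ≤ d ∧ 0 ≤ 2 * √(a * e) + c) ∨
    (0 ≤ quarticDisc a b c d e ∧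
      |b * √e - d * √a| ≤ 4 * √(a * c * e + 2 * a * e * √(a * e)) ∧
      ((-2 * √(a * e) ≤ c ∧ c ≤ 6 * √(a * e)) ∨
        (0 < c - 6 * √(a * e) ∧
          -4 * √(a * c * e - 2 * a * e * √(a * e)) ≤ b * √e + d * √a)))

theorem nonnegCriterion_one_one_iff {α β γ : ℝ} :
    NonnegCriterion 1 α β γ 1 ↔
      (quarticDisc 1 α β γ 1 ≤ 0 ∧ 0 < α + γ) ∨ (0 ≤ α ∧ 0 ≤ γ ∧ -2 ≤ β) ∨
        (0 ≤ quarticDisc 1 α β γ 1 ∧ (α - γ) ^ 2 ≤ 16 * (β + 2) ∧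
          (β ≤ 6 ∨ 0 ≤ α + γ ∨ (α + γ) ^ 2 ≤ 16 * (β - 2))) := by
  have habs (hβ : -2 ≤ β) : |α - γ| ≤ 4 * √(β + 2) ↔ (α - γ) ^ 2 ≤ 16 * (β + 2) := by
    rw [abs_le_mul_sqrt_iff (by norm_num) (by linarith)]; norm_num
  have hneg (hβ : 6 < β) :
      -4 * √(β - 2) ≤ α + γ ↔ 0 ≤ α + γ ∨ (α + γ) ^ 2 ≤ 16 * (β - 2) := by
    rw [neg_mul_sqrt_le_iff (by norm_num) (by linarith)]; norm_num
  have hβ (h : (α - γ) ^ 2 ≤ 16 * (β + 2)) : -2 ≤ β := by nlinarith [sq_nonneg (α - γ)]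
  have hβ' : 0 ≤ 2 + β ↔ -2 ≤ β := neg_le_iff_add_nonneg'.symm
  simp only [NonnegCriterion, Real.sqrt_one, mul_one, one_mul, sub_pos, hβ']
  refine or_congr_right (or_congr_right (and_congr_right fun _ => ⟨?_, ?_⟩))
  · rintro ⟨hsub, ⟨hβ2, hβ6⟩ | ⟨hβ6, hadd⟩⟩
    · exact ⟨(habs hβ2).mp hsub, Or.inl hβ6⟩
    · exact ⟨(habs (by linarith)).mp hsub, Or.inr ((hneg hβ6).mp hadd)⟩
  · rintro ⟨hsub, hadd⟩
    refine ⟨(habs (hβ hsub)).mpr hsub, (le_or_gt β 6).imp (fun h => ⟨hβ hsub, h⟩) fun h => ?_⟩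
    exact ⟨h, (hneg h).mpr (hadd.resolve_left h.not_ge)⟩

theorem nonnegCriterion_scale {p q : ℝ} (hp : 0 < p) (hq : 0 < q) (a b c d e : ℝ) :
    NonnegCriterion (p ^ 4 * a) (p ^ 3 * q * b) ((p * q) ^ 2 * c) (p * q ^ 3 * d) (q ^ 4 * e) ↔
      NonnegCriterion a b c d e := by
  have hm : 0 < (p * q) ^ 3 := by positivity
  have hn : 0 < (p * q) ^ 2 := by positivity
  have hk : 0 < (p * q) ^ 12 := by positivity
  have hnonpos : (p * q) ^ 12 * quarticDisc a b c d e ≤ 0 ↔ quarticDisc a b c d e ≤ 0 := by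
    rw [← not_lt, mul_pos_iff_of_pos_left hk, not_lt]
  have hsqrt_a : √(p ^ 4 * a) = p ^ 2 * √a := by
    rw [← sqrt_sq_mul (by positivity)]; ring_nf
  have hsqrt_e : √(q ^ 4 * e) = q ^ 2 * √e := by
    rw [← sqrt_sq_mul (by positivity)]; ring_nf
  have hsqrt_ae : √(p ^ 4 * a * (q ^ 4 * e)) = (p * q) ^ 2 * √(a * e) := by
    rw [← sqrt_sq_mul (by positivity)]; ring_nf
  have hsqrt_add : √(p ^ 4 * a * ((p * q) ^ 2 * c) * (q ^ 4 * e) +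
      2 * (p ^ 4 * a) * (q ^ 4 * e) * ((p * q) ^ 2 * √(a * e))) =
      (p * q) ^ 3 * √(a * c * e + 2 * a * e * √(a * e)) := by
    rw [← sqrt_sq_mul hm.le]; ring_nf
  have hsqrt_sub : √(p ^ 4 * a * ((p * q) ^ 2 * c) * (q ^ 4 * e) -
      2 * (p ^ 4 * a) * (q ^ 4 * e) * ((p * q) ^ 2 * √(a * e))) =
      (p * q) ^ 3 * √(a * c * e - 2 * a * e * √(a * e)) := by
    rw [← sqrt_sq_mul hm.le]; ring_nf
  have hb : p ^ 3 * q * b * (q ^ 2 * √e) = (p * q) ^ 3 * (b * √e) := by ring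
  have hd : p * q ^ 3 * d * (p ^ 2 * √a) = (p * q) ^ 3 * (d * √a) := by ring
  simp only [NonnegCriterion, quarticDisc_scale, hsqrt_a, hsqrt_e, hsqrt_ae, hsqrt_add, hsqrt_sub,
    hb, hd]
  simp only [mul_left_comm _ ((p * q) ^ 3), mul_left_comm _ ((p * q) ^ 2), ← mul_add, ← mul_sub,
    abs_mul, abs_of_pos hm, mul_le_mul_iff_right₀ hm, mul_le_mul_iff_right₀ hn,
    mul_nonneg_iff_of_pos_left hn, mul_pos_iff_of_pos_left hn, mul_pos_iff_of_pos_left hm,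
    mul_nonneg_iff_of_pos_left hk, hnonpos,
    mul_nonneg_iff_of_pos_left (show 0 < p ^ 3 * q by positivity),
    mul_nonneg_iff_of_pos_left (show 0 < p * q ^ 3 by positivity)]

theorem forall_pos_quartic_nonneg_scale {K : Type*} [Field K] [LinearOrder K]
    [IsStrictOrderedRing K] {p q : K} (hp : 0 < p) (hq : 0 < q) (a b c d e : K) :
    (∀ t : K, 0 < t → 0 ≤ p ^ 4 * a * t ^ 4 + p ^ 3 * q * b * t ^ 3 + (p * q) ^ 2 * c * t ^ 2 +
        p * q ^ 3 * d * t + q ^ 4 * e) ↔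
      ∀ t : K, 0 < t → 0 ≤ a * t ^ 4 + b * t ^ 3 + c * t ^ 2 + d * t + e := by
  have hscale (t : K) : p ^ 4 * a * (q * t / p) ^ 4 + p ^ 3 * q * b * (q * t / p) ^ 3 +
      (p * q) ^ 2 * c * (q * t / p) ^ 2 + p * q ^ 3 * d * (q * t / p) + q ^ 4 * e =
      q ^ 4 * (a * t ^ 4 + b * t ^ 3 + c * t ^ 2 + d * t + e) := by
    field_simp
  constructor
  · intro h t ht
    have hqt := h (q * t / p) (by positivity)
    rw [hscale] at hqt
    exact nonneg_of_mul_nonneg_right hqt (by positivity)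
  · intro h t ht
    have hpt := mul_nonneg (pow_pos hq 4).le (h (p * t / q) (by positivity))
    rwa [← hscale, mul_div_cancel₀ _ hq.ne', mul_div_cancel_left₀ _ hp.ne'] at hpt

/-- The resultant of `t² + u x t + x²` and `t² + v y t + y²` when `x y = 1`, as a function of
`k = x² + y²`. -/
def factorResultant {R : Type*} [CommRing R] (u v k : R) : R :=
  k ^ 2 - u * v * k + u ^ 2 + v ^ 2 - 4

section FactorInequalities

variable {R : Type*} [CommRing R] [LinearOrder R] [IsStrictOrderedRing R] {u v k : R}

theorem factorResultant_pos_of_mul_neg (h : (u ^ 2 - 4) * (v ^ 2 - 4) < 0) :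
    0 < factorResultant u v k := by
  have hfour : 4 * factorResultant u v k = (2 * k - u * v) ^ 2 - (u ^ 2 - 4) * (v ^ 2 - 4) := by
    unfold factorResultant
    ring
  linarith [sq_nonneg (2 * k - u * v)]

theorem factorResultant_pos_of_mul_neg_of_two_le (huv : u * v < 0) (hk : 2 ≤ k) :
    0 < factorResultant u v k := by
  have huvk : u * v * k < 0 := mul_neg_of_neg_of_pos huv (by linarith)
  have hk_sq : 4 ≤ k ^ 2 := by nlinarith
  unfold factorResultant
  linarith [sq_nonneg u, sq_nonneg v]

theorem lt_sub_sq_mul_of_mul_lt_neg_four (huv : u * v < -4) (hk : 2 ≤ k) :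
    16 * (k + u * v + 2) < (u - v) ^ 2 * (k - 2) := by
  have hsq : -4 * (u * v) ≤ (u - v) ^ 2 := by linarith [sq_nonneg (u + v)]
  calc 16 * (k + u * v + 2) < -4 * (u * v) * (k - 2) := by nlinarith
    _ ≤ (u - v) ^ 2 * (k - 2) := mul_le_mul_of_nonneg_right hsq (by linarith)

theorem eq_and_eq_two_of_add_sq_mul_le (huv : 4 < u * v) (hk : 2 ≤ k)
    (h : (u + v) ^ 2 * (k + 2) ≤ 16 * (k + u * v - 2)) : u = v ∧ k = 2 := by
  have hk2 : 0 < k + 2 := by linarith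
  have hsq : 0 ≤ (u - v) ^ 2 * (k + 2) := by positivity
  have hmul : 0 ≤ (u * v - 4) * (k - 2) := mul_nonneg (by linarith) (by linarith)
  have hsum : (u + v) ^ 2 * (k + 2) - 16 * (k + u * v - 2) =
      (u - v) ^ 2 * (k + 2) + 4 * ((u * v - 4) * (k - 2)) := by ring
  rw [← sub_nonpos, hsum] at h
  obtain ⟨hsq_zero, hmul_zero⟩ : (u - v) ^ 2 * (k + 2) = 0 ∧ (u * v - 4) * (k - 2) = 0 :=
    ⟨by linarith, by linarith⟩
  exact ⟨sub_eq_zero.mp (sq_eq_zero_iff.mp ((mul_eq_zero_iff_right hk2.ne').mp hsq_zero)),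
    sub_eq_zero.mp ((mul_eq_zero_iff_left (sub_pos.mpr huv).ne').mp hmul_zero)⟩

theorem add_sq_mul_le_of_sq_le_four (hu : u ^ 2 ≤ 4) (hv : v ^ 2 ≤ 4) (hk : 6 ≤ k + u * v) :
    (u + v) ^ 2 * (k + 2) ≤ 16 * (k + u * v - 2) := by
  have hσ : 4 * (u + v) ^ 2 ≤ (4 + u * v) ^ 2 := by
    linarith [mul_nonneg (sub_nonneg.mpr hu) (sub_nonneg.mpr hv)]
  have hσ16 : (u + v) ^ 2 ≤ 16 := by linarith [sq_nonneg (u - v)]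
  have huv : |u * v| ≤ 4 := abs_le_of_sq_le_sq (by nlinarith) (by norm_num)
  obtain ⟨huv_ge, huv_le⟩ := abs_le.mp huv
  have hcubic : (u + v) ^ 2 * (8 - u * v) ≤ 64 := by
    have := mul_le_mul_of_nonneg_right hσ (show 0 ≤ 8 - u * v by linarith)
    have : 0 ≤ (u * v - 4) ^ 2 * (u * v + 8) := mul_nonneg (sq_nonneg _) (by linarith)
    linarith
  linarith [mul_nonneg (sub_nonneg.mpr hσ16) (sub_nonneg.mpr hk)]

end FactorInequalities

/-- A factorization
`t⁴ + α t³ + β t² + γ t + 1 = (t² + u x t + x²) (t² + v y t + y²)` with `x, y > 0`, given by the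
comparison of coefficients. Writing the linear coefficients as `u x` and `v y` makes the
discriminants of the factors `x² (u² - 4)` and `y² (v² - 4)`. -/
structure BalancedFactorization (α β γ u v x y : ℝ) : Prop where
  x_pos : 0 < x
  y_pos : 0 < y
  mul_eq_one : x * y = 1
  cubic_coeff : α = u * x + v * y
  quadratic_coeff : β = x ^ 2 + y ^ 2 + u * v
  linear_coeff : γ = u * y + v * x

/-- The resolvent cubic, up to sign, of `t⁴ + α t³ + β t² + γ t + 1`. Its roots are the values of
`x² + y²` in the factorizations `(t² + u x t + x²) (t² + v y t + y²)` with `x y = 1`. -/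
def resolventCubic {R : Type*} [CommRing R] (α β γ k : R) : R :=
  4 * (β - k) * (k ^ 2 - 4) - (α + γ) ^ 2 * (k - 2) + (α - γ) ^ 2 * (k + 2)

theorem exists_resolventCubic_eq_zero_of_ne {α γ : ℝ} (β : ℝ) (hne : α ≠ γ) :
    ∃ k, 2 < k ∧ resolventCubic α β γ k = 0 := by
  have hB : 0 < (α - γ) ^ 2 := by positivity [sub_ne_zero.mpr hne]
  obtain ⟨K, hK⟩ : ∃ K, K = 3 + |β| + (α - γ) ^ 2 := ⟨_, rfl⟩
  have hβK : 3 + (α - γ) ^ 2 ≤ K - β := by linarith [le_abs_self β]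
  have hK3 : 3 ≤ K := by linarith [abs_nonneg β]
  have hneg : resolventCubic α β γ K < 0 := by
    have hdom : (α - γ) ^ 2 < 4 * (K - β) * (K - 2) := by nlinarith
    have := mul_lt_mul_of_pos_right hdom (show 0 < K + 2 by linarith)
    have := mul_nonneg (sq_nonneg (α + γ)) (show 0 ≤ K - 2 by linarith)
    unfold resolventCubic
    linarith
  have hpos : 0 < resolventCubic α β γ 2 := by
    unfold resolventCubic
    linarith
  obtain ⟨k, hk, hk0⟩ := intermediate_value_Ioo' (show 2 ≤ K by linarith)
    (by unfold resolventCubic; fun_prop) ⟨hneg, hpos⟩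
  exact ⟨k, hk.1, hk0⟩

theorem exists_resolventCubic_eq_zero_of_lt {α β : ℝ} (h : α ^ 2 < 4 * (β - 2)) :
    ∃ k, 2 < k ∧ resolventCubic α β α k = 0 := by
  have hβ : 2 ≤ β := by linarith [sq_nonneg α]
  obtain ⟨k, hk, hk0⟩ := intermediate_value_Ioo' (show 2 ≤ β + 1 by linarith)
    (f := fun k => (β - k) * (k + 2) - α ^ 2) (by fun_prop)
    (show (0 : ℝ) ∈ _ from ⟨by linarith [sq_nonneg α], by linarith⟩)
  exact ⟨k, hk.1, by unfold resolventCubic; linear_combination 4 * (k - 2) * hk0⟩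

namespace BalancedFactorization

variable {α β γ u v x y : ℝ}

theorem exists_of_add_eq_of_sub_eq {k s d : ℝ} (hk : 2 ≤ k) (hadd : α + γ = s * √(k + 2))
    (hsub : α - γ = d * √(k - 2)) (hβ : 4 * (β - k) = s ^ 2 - d ^ 2) :
    ∃ u v x y, BalancedFactorization α β γ u v x y := by
  have hp := Real.sq_sqrt (show 0 ≤ k + 2 by linarith)
  have hq := Real.sq_sqrt (show 0 ≤ k - 2 by linarith)
  have hq_nonneg := Real.sqrt_nonneg (k - 2)
  have hqp : √(k - 2) < √(k + 2) := Real.sqrt_lt_sqrt (by linarith) (by linarith)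
  exact ⟨(s + d) / 2, (s - d) / 2, (√(k + 2) + √(k - 2)) / 2, (√(k + 2) - √(k - 2)) / 2,
    { x_pos := by linarith
      y_pos := by linarith
      mul_eq_one := by linear_combination (hp - hq) / 4
      cubic_coeff := by linear_combination (hadd + hsub) / 2
      quadratic_coeff := by linear_combination hβ / 4 - (hp + hq) / 2
      linear_coeff := by linear_combination (hadd - hsub) / 2 }⟩

theorem exists_of_resolventCubic_eq_zero {k : ℝ} (hk : 2 < k) (h : resolventCubic α β γ k = 0) :
    ∃ u v x y, BalancedFactorization α β γ u v x y := by
  have hp : 0 < k + 2 := by linarith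
  have hq : 0 < k - 2 := by linarith
  have : 0 < √(k + 2) := Real.sqrt_pos.mpr hp
  have : 0 < √(k - 2) := Real.sqrt_pos.mpr hq
  refine exists_of_add_eq_of_sub_eq (s := (α + γ) / √(k + 2)) (d := (α - γ) / √(k - 2)) hk.le
    (by field_simp) (by field_simp) ?_
  rw [div_pow, div_pow, Real.sq_sqrt hp.le, Real.sq_sqrt hq.le]
  unfold resolventCubic at h
  field_simp
  linear_combination h

theorem exists_factorization (α β γ : ℝ) : ∃ u v x y, BalancedFactorization α β γ u v x y := by
  rcases ne_or_eq α γ with hne | rfl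
  · obtain ⟨k, hk, hk0⟩ := exists_resolventCubic_eq_zero_of_ne β hne
    exact exists_of_resolventCubic_eq_zero hk hk0
  rcases lt_or_ge (α ^ 2) (4 * (β - 2)) with hlt | hge
  · obtain ⟨k, hk, hk0⟩ := exists_resolventCubic_eq_zero_of_lt hlt
    exact exists_of_resolventCubic_eq_zero hk hk0
  · refine exists_of_add_eq_of_sub_eq (s := α) (d := √(α ^ 2 - 4 * (β - 2))) le_rfl ?_ (by simp) ?_
    · rw [show (2 + 2 : ℝ) = 2 ^ 2 by norm_num, Real.sqrt_sq (by norm_num)]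
      ring
    · rw [Real.sq_sqrt (by linarith)]
      ring

theorem symm (h : BalancedFactorization α β γ u v x y) : BalancedFactorization α β γ v u y x where
  x_pos := h.y_pos
  y_pos := h.x_pos
  mul_eq_one := by rw [mul_comm, h.mul_eq_one]
  cubic_coeff := by rw [h.cubic_coeff, add_comm]
  quadratic_coeff := by rw [h.quadratic_coeff]; ring
  linear_coeff := by rw [h.linear_coeff, add_comm]

theorem quartic_eq (h : BalancedFactorization α β γ u v x y) (t : ℝ) :
    t ^ 4 + α * t ^ 3 + β * t ^ 2 + γ * t + 1 =
      (t ^ 2 + u * x * t + x ^ 2) * (t ^ 2 + v * y * t + y ^ 2) := by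
  rw [h.cubic_coeff, h.quadratic_coeff, h.linear_coeff]
  linear_combination (-u * v * t ^ 2 - v * x * t - u * y * t - (x * y + 1)) * h.mul_eq_one

theorem add_eq (h : BalancedFactorization α β γ u v x y) : α + γ = (u + v) * (x + y) := by
  rw [h.cubic_coeff, h.linear_coeff]
  ring

theorem add_sq_eq (h : BalancedFactorization α β γ u v x y) :
    (α + γ) ^ 2 = (u + v) ^ 2 * (x ^ 2 + y ^ 2 + 2) := by
  rw [h.add_eq]
  linear_combination 2 * (u + v) ^ 2 * h.mul_eq_one

theorem sub_sq_eq (h : BalancedFactorization α β γ u v x y) :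
    (α - γ) ^ 2 = (u - v) ^ 2 * (x ^ 2 + y ^ 2 - 2) := by
  rw [h.cubic_coeff, h.linear_coeff]
  linear_combination -2 * (u - v) ^ 2 * h.mul_eq_one

theorem add_pos_iff (h : BalancedFactorization α β γ u v x y) : 0 < α + γ ↔ 0 < u + v := by
  rw [h.add_eq, mul_pos_iff_of_pos_right (add_pos h.x_pos h.y_pos)]

theorem add_nonneg_iff (h : BalancedFactorization α β γ u v x y) : 0 ≤ α + γ ↔ 0 ≤ u + v := by
  rw [h.add_eq, mul_nonneg_iff_of_pos_right (add_pos h.x_pos h.y_pos)]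

theorem two_le_sq_add_sq (h : BalancedFactorization α β γ u v x y) : 2 ≤ x ^ 2 + y ^ 2 := by
  linarith [sq_nonneg (x - y), h.mul_eq_one]

theorem eq_of_sq_add_sq_eq_two (h : BalancedFactorization α β γ u v x y)
    (hxy : x ^ 2 + y ^ 2 = 2) : x = y := by
  have : (x - y) ^ 2 = 0 := by linear_combination hxy - 2 * h.mul_eq_one
  exact sub_eq_zero.mp (sq_eq_zero_iff.mp this)

theorem quarticDisc_eq (h : BalancedFactorization α β γ u v x y) :
    quarticDisc 1 α β γ 1 = 27 * ((u ^ 2 - 4) * (v ^ 2 - 4)) *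
      factorResultant u v (x ^ 2 + y ^ 2) ^ 2 := by
  have hmul : α * γ = u ^ 2 + v ^ 2 + u * v * (x ^ 2 + y ^ 2) := by
    linear_combination (h.add_sq_eq - h.sub_sq_eq) / 4
  have hsq : α ^ 2 + γ ^ 2 = (u ^ 2 + v ^ 2) * (x ^ 2 + y ^ 2) + 4 * (u * v) := by
    linear_combination (h.add_sq_eq + h.sub_sq_eq) / 2
  calc quarticDisc 1 α β γ 1
      = 4 * (12 - 3 * (α * γ) + β ^ 2) ^ 3 -
        (72 * β + 9 * (α * γ) * β - 2 * β ^ 3 - 27 * (α ^ 2 + γ ^ 2)) ^ 2 := by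
        unfold quarticDisc; ring
    _ = _ := by rw [hmul, hsq, h.quadratic_coeff, factorResultant]; ring

theorem neg_two_le_or_eq_of_forall_pos (h : BalancedFactorization α β γ u v x y)
    (hnonneg : ∀ t : ℝ, 0 < t → 0 ≤ t ^ 4 + α * t ^ 3 + β * t ^ 2 + γ * t + 1) :
    -2 ≤ v ∨ (u = v ∧ x = y) := by
  refine (le_or_gt (-2) v).imp_right fun hv => ?_
  have hy := h.y_pos
  have hv_sq : 4 * y ^ 2 < (-v * y) ^ 2 := by
    rw [mul_pow]
    exact mul_lt_mul_of_pos_right (by nlinarith) (by positivity)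
  obtain ⟨r, s, hr, hrs, hadd, hmul⟩ := exists_pos_lt_add_eq_mul_eq
    (mul_pos (by linarith) hy) (by positivity) hv_sq
  -- The second factor changes sign at `r` and at `s`, hence so does the first.
  have hroot (t : ℝ) (ht : 0 < t) (hzero : t ^ 2 + v * y * t + y ^ 2 = 0)
      (hsimple : 2 * t + v * y ≠ 0) : t ^ 2 + u * x * t + x ^ 2 = 0 := by
    refine eq_zero_of_mul_nonneg_of_hasDerivAt (g := fun t => t ^ 2 + u * x * t + x ^ 2)
      (h := fun t => t ^ 2 + v * y * t + y ^ 2) (by fun_prop) ?_ hzero hsimple ?_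
    · simpa using
        (((hasDerivAt_id t).pow 2).add ((hasDerivAt_id t).const_mul (v * y))).add_const (y ^ 2)
    · filter_upwards [lt_mem_nhds ht] with z hz
      exact h.quartic_eq z ▸ hnonneg z hz
  have hr_zero := hroot r hr (by linear_combination r * hadd - hmul) (by linarith)
  have hs_zero := hroot s (hr.trans hrs) (by linear_combination s * hadd - hmul) (by linarith)
  have hux : u * x = v * y := by
    refine mul_right_cancel₀ (sub_ne_zero.mpr hrs.ne') ?_
    linear_combination hs_zero - hr_zero - (s - r) * hadd
  have hxy : x = y := by
    rw [← sq_eq_sq₀ h.x_pos.le hy.le]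
    linear_combination hr_zero - r * hadd + hmul - r * hux
  exact ⟨mul_right_cancel₀ h.x_pos.ne' (by rw [hux, hxy]), hxy⟩

theorem forall_pos_nonneg_iff (h : BalancedFactorization α β γ u v x y) :
    (∀ t : ℝ, 0 < t → 0 ≤ t ^ 4 + α * t ^ 3 + β * t ^ 2 + γ * t + 1) ↔
      (-2 ≤ u ∧ -2 ≤ v) ∨ (u = v ∧ x = y) := by
  constructor
  · intro hnonneg
    rcases h.neg_two_le_or_eq_of_forall_pos hnonneg with hv | heq
    · exact (h.symm.neg_two_le_or_eq_of_forall_pos hnonneg).imp (⟨·, hv⟩)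
        (And.imp Eq.symm Eq.symm)
    · exact Or.inr heq
  · rintro (⟨hu, hv⟩ | ⟨rfl, rfl⟩) t ht <;> rw [h.quartic_eq]
    · exact mul_nonneg (sq_add_mul_add_sq_nonneg h.x_pos.le hu ht.le)
        (sq_add_mul_add_sq_nonneg h.y_pos.le hv ht.le)
    · exact mul_self_nonneg _

theorem neg_two_le_of_quarticDisc_nonpos (h : BalancedFactorization α β γ u v x y)
    (hdisc : quarticDisc 1 α β γ 1 ≤ 0) (hadd : 0 < α + γ) : -2 ≤ v := by
  by_contra! hv
  have huv := h.add_pos_iff.mp hadd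
  have hmul : 0 < (u ^ 2 - 4) * (v ^ 2 - 4) := mul_pos (by nlinarith) (by nlinarith)
  have hres : 0 < factorResultant u v (x ^ 2 + y ^ 2) :=
    factorResultant_pos_of_mul_neg_of_two_le
      (mul_neg_of_pos_of_neg (by linarith) (by linarith)) h.two_le_sq_add_sq
  rw [h.quarticDisc_eq] at hdisc
  exact hdisc.not_gt (by positivity)

theorem neg_two_le_or_eq_of_quarticDisc_nonneg (h : BalancedFactorization α β γ u v x y)
    (hdisc : 0 ≤ quarticDisc 1 α β γ 1) (hsub : (α - γ) ^ 2 ≤ 16 * (β + 2))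
    (hadd : β ≤ 6 ∨ 0 ≤ α + γ ∨ (α + γ) ^ 2 ≤ 16 * (β - 2)) :
    -2 ≤ v ∨ (u = v ∧ x = y) := by
  refine (le_or_gt (-2) v).imp_right fun hv => ?_
  have hk := h.two_le_sq_add_sq
  rw [h.sub_sq_eq, h.quadratic_coeff] at hsub
  rw [h.add_nonneg_iff, h.add_sq_eq, h.quadratic_coeff] at hadd
  rw [h.quarticDisc_eq] at hdisc
  rcases le_or_gt u (-2) with hu | hu
  · have huv : 4 < u * v := by nlinarith
    have hadd_sq := (hadd.resolve_left (by linarith)).resolve_left (by linarith)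
    exact (eq_and_eq_two_of_add_sq_mul_le huv hk hadd_sq).imp_right h.eq_of_sq_add_sq_eq_two
  exfalso
  rcases lt_or_ge u 2 with hu' | hu'
  · have hmul : (u ^ 2 - 4) * (v ^ 2 - 4) < 0 :=
      mul_neg_of_neg_of_pos (by nlinarith) (by nlinarith)
    have hres := factorResultant_pos_of_mul_neg (k := x ^ 2 + y ^ 2) hmul
    exact hdisc.not_gt (mul_neg_of_neg_of_pos (by linarith) (pow_pos hres 2))
  · exact hsub.not_gt (lt_sub_sq_mul_of_mul_lt_neg_four (by nlinarith) hk)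

theorem forall_pos_nonneg_of_nonnegCriterion (h : BalancedFactorization α β γ u v x y)
    (hcrit : NonnegCriterion 1 α β γ 1) :
    ∀ t : ℝ, 0 < t → 0 ≤ t ^ 4 + α * t ^ 3 + β * t ^ 2 + γ * t + 1 := by
  rcases nonnegCriterion_one_one_iff.mp hcrit with
    ⟨hdisc, hadd⟩ | ⟨hα, hγ, hβ⟩ | ⟨hdisc, hsub, hadd⟩
  · exact h.forall_pos_nonneg_iff.mpr <| Or.inl
      ⟨h.symm.neg_two_le_of_quarticDisc_nonpos hdisc hadd,
        h.neg_two_le_of_quarticDisc_nonpos hdisc hadd⟩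
  · intro t ht
    have : 0 ≤ (t ^ 2 - 1) ^ 2 + α * t ^ 3 + (β + 2) * t ^ 2 + γ * t := by
      have : 0 ≤ β + 2 := by linarith
      positivity
    linarith
  · rw [h.forall_pos_nonneg_iff]
    rcases h.neg_two_le_or_eq_of_quarticDisc_nonneg hdisc hsub hadd with hv | heq
    · exact (h.symm.neg_two_le_or_eq_of_quarticDisc_nonneg hdisc hsub hadd).imp (⟨·, hv⟩)
        (And.imp Eq.symm Eq.symm)
    · exact Or.inr heq

theorem nonnegCriterion_of_eq (h : BalancedFactorization α β γ u u x x) :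
    NonnegCriterion 1 α β γ 1 := by
  have hx : x ^ 2 = 1 := by rw [sq, h.mul_eq_one]
  have hβ := h.quadratic_coeff
  refine nonnegCriterion_one_one_iff.mpr (Or.inr (Or.inr ⟨?_, ?_, Or.inr (Or.inr ?_)⟩))
  · exact le_of_eq (by rw [h.quarticDisc_eq, factorResultant, hx]; ring)
  · rw [h.sub_sq_eq, hβ]
    nlinarith
  · rw [h.add_sq_eq, hβ, hx]
    linarith

theorem nonnegCriterion_of_sq_le_four (h : BalancedFactorization α β γ u v x y)
    (hu : u ^ 2 ≤ 4) (hv : v ^ 2 ≤ 4) : NonnegCriterion 1 α β γ 1 := by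
  have hk := h.two_le_sq_add_sq
  refine nonnegCriterion_one_one_iff.mpr (Or.inr (Or.inr ⟨?_, ?_, ?_⟩))
  · have := mul_nonneg_of_nonpos_of_nonpos (sub_nonpos.mpr hu) (sub_nonpos.mpr hv)
    rw [h.quarticDisc_eq]
    positivity
  · have hsq : (u - v) ^ 2 ≤ 16 := by linarith [sq_nonneg (u + v)]
    have huv : -4 ≤ u * v := by linarith [sq_nonneg (u + v)]
    rw [h.sub_sq_eq, h.quadratic_coeff]
    linarith [mul_le_mul_of_nonneg_right hsq (sub_nonneg.mpr hk)]
  · refine (le_or_gt β 6).imp_right fun hβ => Or.inr ?_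
    rw [h.quadratic_coeff] at hβ
    rw [h.add_sq_eq, h.quadratic_coeff]
    exact add_sq_mul_le_of_sq_le_four hu hv hβ.le

theorem nonnegCriterion_of_neg_two_le (h : BalancedFactorization α β γ u v x y)
    (hu : -2 ≤ u) (hv : -2 ≤ v) : NonnegCriterion 1 α β γ 1 := by
  wlog huv : u ≤ v generalizing u v x y
  · exact this h.symm hv hu (le_of_not_ge huv)
  rcases le_or_gt v 2 with hv2 | hv2
  · exact h.nonnegCriterion_of_sq_le_four (by nlinarith) (by nlinarith)
  refine nonnegCriterion_one_one_iff.mpr ?_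
  rcases le_or_gt u 2 with hu2 | hu2
  · refine Or.inl ⟨?_, h.add_pos_iff.mpr (by linarith)⟩
    have hmul : (u ^ 2 - 4) * (v ^ 2 - 4) ≤ 0 :=
      mul_nonpos_of_nonpos_of_nonneg (by nlinarith) (by nlinarith)
    rw [h.quarticDisc_eq]
    exact mul_nonpos_of_nonpos_of_nonneg (by linarith) (sq_nonneg _)
  · have hx := h.x_pos
    have hy := h.y_pos
    have : 0 < u := by linarith
    have : 0 < v := by linarith
    have hβ : -2 ≤ x ^ 2 + y ^ 2 + u * v := (show (-2 : ℝ) ≤ 0 by norm_num).trans (by positivity)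
    rw [h.cubic_coeff, h.linear_coeff, h.quadratic_coeff]
    exact Or.inr (Or.inl ⟨by positivity, by positivity, hβ⟩)

end BalancedFactorization

theorem forall_pos_normalized_quartic_nonneg_iff (α β γ : ℝ) :
    (∀ t : ℝ, 0 < t → 0 ≤ t ^ 4 + α * t ^ 3 + β * t ^ 2 + γ * t + 1) ↔
      NonnegCriterion 1 α β γ 1 := by
  obtain ⟨u, v, x, y, h⟩ := BalancedFactorization.exists_factorization α β γ
  refine ⟨fun hnonneg => ?_, h.forall_pos_nonneg_of_nonnegCriterion⟩
  rcases h.forall_pos_nonneg_iff.mp hnonneg with ⟨hu, hv⟩ | ⟨rfl, rfl⟩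
  · exact h.nonnegCriterion_of_neg_two_le hu hv
  · exact h.nonnegCriterion_of_eq

theorem exists_pos_pow_four_eq {a : ℝ} (ha : 0 < a) : ∃ p, 0 < p ∧ p ^ 4 = a :=
  ⟨a ^ ((4 : ℕ) : ℝ)⁻¹, Real.rpow_pos_of_pos ha _, Real.rpow_inv_natCast_pow ha.le four_ne_zero⟩

/-- Qi–Song–Zhang: for a quartic `f(t) = at⁴ + bt³ + ct² + dt + e` with `a > 0`, `e > 0`,
`f(t) ≥ 0` for all `t > 0` iff one of the stated conditions on the coefficients and the
discriminant-type quantity `Δ` holds. -/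
theorem quartic_nonneg_on_pos (a b c d e Δ : ℝ) (ha : 0 < a) (he : 0 < e)
    (hΔ : Δ = 4 * (12 * a * e - 3 * b * d + c ^ 2) ^ 3 -
      (72 * a * c * e + 9 * b * c * d - 2 * c ^ 3 - 27 * a * d ^ 2 - 27 * b ^ 2 * e) ^ 2) :
    (∀ t : ℝ, 0 < t → 0 ≤ a * t ^ 4 + b * t ^ 3 + c * t ^ 2 + d * t + e) ↔
      ((Δ ≤ 0 ∧ 0 < b * Real.sqrt e + d * Real.sqrt a) ∨
       (0 ≤ b ∧ 0 ≤ d ∧ 0 ≤ 2 * Real.sqrt (a * e) + c) ∨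
       (0 ≤ Δ ∧
        |b * Real.sqrt e - d * Real.sqrt a| ≤
          4 * Real.sqrt (a * c * e + 2 * a * e * Real.sqrt (a * e)) ∧
        ((-2 * Real.sqrt (a * e) ≤ c ∧ c ≤ 6 * Real.sqrt (a * e)) ∨
         (0 < c - 6 * Real.sqrt (a * e) ∧
          -4 * Real.sqrt (a * c * e - 2 * a * e * Real.sqrt (a * e)) ≤
            b * Real.sqrt e + d * Real.sqrt a)))) := by
  subst hΔ
  obtain ⟨p, hp, rfl⟩ := exists_pos_pow_four_eq ha
  obtain ⟨q, hq, rfl⟩ := exists_pos_pow_four_eq he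
  obtain ⟨α, rfl⟩ : ∃ α, b = p ^ 3 * q * α := ⟨b / (p ^ 3 * q), by field_simp⟩
  obtain ⟨β, rfl⟩ : ∃ β, c = (p * q) ^ 2 * β := ⟨c / ((p * q) ^ 2), by field_simp⟩
  obtain ⟨γ, rfl⟩ : ∃ γ, d = p * q ^ 3 * γ := ⟨d / (p * q ^ 3), by field_simp⟩
  have hquartic := forall_pos_quartic_nonneg_scale hp hq 1 α β γ 1
  have hcrit := nonnegCriterion_scale hp hq 1 α β γ 1
  simp only [mul_one, one_mul] at hquartic hcrit
  exact (hquartic.trans (forall_pos_normalized_quartic_nonneg_iff α β γ)).trans hcrit.symm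
end

section
/- Let A be a 4th order 2-dimensional symmetric tensor with a₁₁₁₁ > 0 and a₂₂₂₂ > 0. Then A is copositive (Ax⁴ ≥ 0 for all x ∈ ℝ²₊) if and only if one of the following holds: (1) I³ − 27J² ≤ 0 and a₁₂₂₂√a₁₁₁₁ + a₁₁₁₂√a₂₂₂₂ > 0; or (2) a₁₂₂₂ ≥ 0, a₁₁₁₂ ≥ 0, and 3a₁₁₂₂ + √(a₁₁₁₁a₂₂₂₂) ≥ 0; or (3) I³ − 27J² ≥ 0, |a₁₁₁₂√a₂₂₂₂ − a₁₂₂₂√a₁₁₁₁| ≤ √(6a₁₁₁₁a₁₁₂₂a₂₂₂₂ + 2a₁₁₁₁a₂₂₂₂√(a₁₁₁₁a₂₂₂₂)), and either (i) −√(a₁₁₁₁a₂₂₂₂) ≤ 3a₁₁₂₂ ≤ 3√(a₁₁₁₁a₂₂₂₂), or (ii) a₁₁₂₂ > √(a₁₁₁₁a₂₂₂₂) and a₁₁₁₂√a₂₂₂₂ + a₁₂₂₂√a₁₁₁₁ ≥ −√(6a₁₁₁₁a₁₁₂₂a₂₂₂₂ − 2a₁₁₁₁a₂₂₂₂√(a₁₁₁₁a₂₂₂₂)).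 -/
/-!
After rescaling both variables the quartic form becomes
`x⁴ + 4ax³y + 6bx²y² + 4cxy³ + y⁴`, which always splits as
`(vx² + 2Pxy + wy²)(wx² + 2Qxy + vy²)` with `v, w > 0`, `wv = 1` and `P ≤ Q`. Such a form is
copositive exactly when `-1 ≤ P` or the two factors coincide, and the criterion is read off from
the formulas expressing `a + c`, `a - c`, `b` and the discriminant in terms of `P, Q, w, v`.
-/

namespace BinaryQuartic

section CommRing

variable {R : Type*} [CommRing R]

/-- The binary quartic form with coefficients `a₀, 4a₁, 6a₂, 4a₃, a₄`, i.e. `Ax⁴` for the symmetric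
tensor `A` whose entry with `i` indices equal to `2` is `aᵢ`. -/
def form (a₀ a₁ a₂ a₃ a₄ x y : R) : R :=
  a₀ * x ^ 4 + 4 * a₁ * x ^ 3 * y + 6 * a₂ * x ^ 2 * y ^ 2 + 4 * a₃ * x * y ^ 3 + a₄ * y ^ 4

/-- The discriminant `I³ - 27J²` of a binary quartic form, where `I` and `J` are its basic
invariants of degree two and three; the discriminant of the associated polynomial is `256` times
as large. -/
def discr (a₀ a₁ a₂ a₃ a₄ : R) : R :=
  (a₀ * a₄ - 4 * a₁ * a₃ + 3 * a₂ ^ 2) ^ 3 -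
    27 * (a₀ * a₂ * a₄ + 2 * a₁ * a₂ * a₃ - a₂ ^ 3 - a₀ * a₃ ^ 2 - a₁ ^ 2 * a₄) ^ 2

theorem form_scale (s u a₀ a₁ a₂ a₃ a₄ x y : R) :
    form (s ^ 4 * a₀) (s ^ 3 * u * a₁) (s ^ 2 * u ^ 2 * a₂) (s * u ^ 3 * a₃) (u ^ 4 * a₄) x y =
      form a₀ a₁ a₂ a₃ a₄ (s * x) (u * y) := by
  unfold form
  ring

theorem discr_scale (s u a₀ a₁ a₂ a₃ a₄ : R) :
    discr (s ^ 4 * a₀) (s ^ 3 * u * a₁) (s ^ 2 * u ^ 2 * a₂) (s * u ^ 3 * a₃) (u ^ 4 * a₄) =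
      (s * u) ^ 12 * discr a₀ a₁ a₂ a₃ a₄ := by
  unfold discr
  ring

theorem form_add_form_swap {a b c x y : R} (hxy : x ^ 2 + y ^ 2 = -(a + c) * (x * y)) :
    form 1 a b c 1 x y + form 1 a b c 1 y x = 2 * (x * y) ^ 2 * (6 * b - 2 - (a + c) ^ 2) := by
  unfold form
  linear_combination (2 * (x ^ 2 + y ^ 2) + 2 * (a + c) * (x * y)) * hxy

end CommRing

theorem discr_mul {K : Type*} [Field K] [CharZero K] (α β γ α' β' γ' : K) :
    16 * discr (α * α') ((α * β' + β * α') / 2) ((α * γ' + 4 * β * β' + γ * α') / 6)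
        ((β * γ' + γ * β') / 2) (γ * γ') =
      (β ^ 2 - α * γ) * (β' ^ 2 - α' * γ') *
        ((α * γ' + γ * α' - 2 * β * β') ^ 2 -
          4 * ((β ^ 2 - α * γ) * (β' ^ 2 - α' * γ'))) ^ 2 := by
  unfold discr
  field_simp
  ring

section Factorization

open Polynomial in
theorem exists_quadratic_factors (p q r s : ℝ) :
    ∃ β γ δ ε : ℝ, p = β + δ ∧ q = γ + ε + β * δ ∧ r = β * ε + γ * δ ∧ s = γ * ε := by
  have hmonic : IsMonicOfDegree (X ^ 4 + C p * X ^ 3 + C q * X ^ 2 + C r * X + C s : ℝ[X]) 4 := by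
    rw [isMonicOfDegree_iff]
    constructor
    · compute_degree
    · compute_degree!
  obtain ⟨f, g, hf, hg, hfg⟩ := hmonic.eq_isMonicOfDegree_two_mul_isMonicOfDegree
  obtain ⟨β, γ, rfl⟩ := isMonicOfDegree_two_iff.1 hf
  obtain ⟨δ, ε, rfl⟩ := isMonicOfDegree_two_iff.1 hg
  have heval (t : ℝ) : t ^ 4 + p * t ^ 3 + q * t ^ 2 + r * t + s =
      (t ^ 2 + β * t + γ) * (t ^ 2 + δ * t + ε) := by
    simpa using congrArg (eval t) hfg
  refine ⟨β, γ, δ, ε, ?_, ?_, ?_, ?_⟩ <;> linarith [heval 0, heval 1, heval (-1), heval 2]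

theorem exists_roots_of_const_neg {β γ : ℝ} (hγ : γ < 0) :
    ∃ r s : ℝ, r < 0 ∧ 0 < s ∧ β = -(r + s) ∧ γ = r * s := by
  have hdisc : √(β ^ 2 - 4 * γ) ^ 2 = β ^ 2 - 4 * γ :=
    Real.sq_sqrt (by linarith [sq_nonneg β])
  have hlt : |β| < √(β ^ 2 - 4 * γ) := by
    rw [← Real.sqrt_sq_eq_abs]
    exact Real.sqrt_lt_sqrt (sq_nonneg β) (by linarith)
  obtain ⟨hlt₁, hlt₂⟩ := abs_lt.1 hlt
  exact ⟨(-β - √(β ^ 2 - 4 * γ)) / 2, (-β + √(β ^ 2 - 4 * γ)) / 2, by linarith, by linarith,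
    by ring, by linear_combination hdisc / 4⟩

theorem exists_quadratic_factors_const_pos {p q r s : ℝ} (hs : 0 < s) :
    ∃ β γ δ ε : ℝ, 0 < γ ∧ 0 < ε ∧
      p = β + δ ∧ q = γ + ε + β * δ ∧ r = β * ε + γ * δ ∧ s = γ * ε := by
  obtain ⟨β, γ, δ, ε, rfl, rfl, rfl, rfl⟩ := exists_quadratic_factors p q r s
  rcases mul_pos_iff.1 hs with ⟨hγ, hε⟩ | ⟨hγ, hε⟩
  · exact ⟨β, γ, δ, ε, hγ, hε, rfl, rfl, rfl, rfl⟩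
  -- Both factors have roots of opposite signs: pair the negative roots and the positive ones.
  · obtain ⟨r₁, s₁, hr₁, hs₁, rfl, rfl⟩ := exists_roots_of_const_neg (β := β) hγ
    obtain ⟨r₂, s₂, hr₂, hs₂, rfl, rfl⟩ := exists_roots_of_const_neg (β := δ) hε
    exact ⟨-(r₁ + r₂), r₁ * r₂, -(s₁ + s₂), s₁ * s₂, mul_pos_of_neg_of_neg hr₁ hr₂,
      mul_pos hs₁ hs₂, by ring, by ring, by ring, by ring⟩

/-- The splitting of the normalized quartic form `form 1 a b c 1` into the quadratic forms
`vx² + 2Pxy + wy²` and `wx² + 2Qxy + vy²` with positive outer coefficients, expressed through the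
coefficients and ordered by `P ≤ Q`. Since `wv = 1`, the discriminants of the factors are
`4(P² - 1)` and `4(Q² - 1)`, whatever `w` and `v` are. -/
structure Splitting (a b c P Q w v : ℝ) : Prop where
  w_pos : 0 < w
  v_pos : 0 < v
  mul_eq_one : w * v = 1
  le : P ≤ Q
  a_eq : a = (v * Q + P * w) / 2
  b_eq : b = (v * v + 4 * P * Q + w * w) / 6
  c_eq : c = (P * v + w * Q) / 2

theorem exists_splitting (a b c : ℝ) : ∃ P Q w v, Splitting a b c P Q w v := by
  obtain ⟨β, γ, δ, ε, hγ, hε, ha, hb, hc, hγε⟩ :=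
    exists_quadratic_factors_const_pos (p := 4 * a) (q := 6 * b) (r := 4 * c) one_pos
  obtain ⟨w, hw, rfl⟩ : ∃ w, 0 < w ∧ γ = w ^ 2 := ⟨√γ, by positivity, (Real.sq_sqrt hγ.le).symm⟩
  obtain ⟨v, hv, rfl⟩ : ∃ v, 0 < v ∧ ε = v ^ 2 := ⟨√ε, by positivity, (Real.sq_sqrt hε.le).symm⟩
  obtain ⟨P, rfl⟩ : ∃ P, β = 2 * P * w := ⟨β / (2 * w), by field_simp⟩
  obtain ⟨Q, rfl⟩ : ∃ Q, δ = 2 * Q * v := ⟨δ / (2 * v), by field_simp⟩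
  have hwv : w * v = 1 := by
    rw [← mul_pow] at hγε
    exact ((pow_eq_one_iff_of_nonneg (by positivity) two_ne_zero).1 hγε.symm)
  have ha' : a = (v * Q + P * w) / 2 := by linear_combination ha / 4
  have hb' : b = (v * v + 4 * P * Q + w * w) / 6 := by
    linear_combination hb / 6 + 4 * P * Q / 6 * hwv
  have hc' : c = (P * v + w * Q) / 2 := by
    linear_combination hc / 4 + (P * v + w * Q) / 2 * hwv
  rcases le_total P Q with hPQ | hQP
  · exact ⟨P, Q, w, v, hw, hv, hwv, hPQ, ha', hb', hc'⟩
  · exact ⟨Q, P, v, w, hv, hw, by linarith, hQP, by linarith, by linarith, by linarith⟩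

end Factorization

section Quadratic

theorem mul_quadratic_eq {R : Type*} [CommRing R] {p q : R} (hpq : p * q = 1) (m x y : R) :
    p * (p * x ^ 2 + 2 * m * x * y + q * y ^ 2) =
      (p * x - y) ^ 2 + 2 * (m + 1) * (p * x * y) := by
  linear_combination y ^ 2 * hpq

variable {R : Type*} [CommRing R] [LinearOrder R] [IsStrictOrderedRing R] {p q m x y : R}

theorem quadratic_nonneg (hp : 0 < p) (hpq : p * q = 1) (hm : -1 ≤ m)
    (hx : 0 ≤ x) (hy : 0 ≤ y) : 0 ≤ p * x ^ 2 + 2 * m * x * y + q * y ^ 2 := by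
  have hm' : 0 ≤ m + 1 := by linarith
  refine nonneg_of_mul_nonneg_right (a := p) ?_ hp
  rw [mul_quadratic_eq hpq]
  positivity

theorem quadratic_pos (hp : 0 < p) (hpq : p * q = 1) (hm : -1 < m)
    (hx : 0 < x) (hy : 0 < y) : 0 < p * x ^ 2 + 2 * m * x * y + q * y ^ 2 := by
  have hm' : 0 < m + 1 := by linarith
  refine pos_of_mul_pos_right (a := p) ?_ hp.le
  rw [mul_quadratic_eq hpq]
  positivity

end Quadratic

/-- Copositivity of the symmetric tensor with entries `a₀, …, a₄`: its quartic form is nonnegative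
on the nonnegative quadrant. -/
def IsCopositive (a₀ a₁ a₂ a₃ a₄ : ℝ) : Prop :=
  ∀ x y, 0 ≤ x → 0 ≤ y → 0 ≤ form a₀ a₁ a₂ a₃ a₄ x y

theorem IsCopositive.add_sq_le {a b c : ℝ} (h : IsCopositive 1 a b c 1) (hac : a + c ≤ -2) :
    (a + c) ^ 2 ≤ 6 * b - 2 := by
  obtain ⟨t, ht⟩ : ∃ t, 1 * (t * t) + (a + c) * t + 1 = 0 :=
    exists_quadratic_eq_zero one_ne_zero
      ⟨√((a + c) ^ 2 - 4), by rw [Real.mul_self_sqrt (by nlinarith), discrim]; ring⟩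
  have ht0 : 0 < t := by nlinarith
  have hsum := form_add_form_swap (b := b)
    (show t ^ 2 + 1 ^ 2 = -(a + c) * (t * 1) by linear_combination ht)
  have hnonneg : 0 ≤ 2 * (t * 1) ^ 2 * (6 * b - 2 - (a + c) ^ 2) :=
    hsum ▸ add_nonneg (h t 1 ht0.le zero_le_one) (h 1 t zero_le_one ht0.le)
  linarith [nonneg_of_mul_nonneg_right hnonneg (by positivity)]

theorem IsCopositive.neg_sqrt_le_add {a b c : ℝ} (h : IsCopositive 1 a b c 1) (hb : 1 < b) :
    -√(6 * b - 2) ≤ a + c := by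
  rcases le_total (a + c) (-2) with hac | hac
  · exact (abs_le.1 (Real.abs_le_sqrt (h.add_sq_le hac))).1
  · have : 2 ≤ √(6 * b - 2) := Real.le_sqrt_of_sq_le (by linarith)
    linarith

theorem isCopositive_of_nonneg {a b c : ℝ} (ha : 0 ≤ a) (hb : 0 ≤ 3 * b + 1) (hc : 0 ≤ c) :
    IsCopositive 1 a b c 1 := fun x y hx hy => by
  have hform : form 1 a b c 1 x y = (x ^ 2 - y ^ 2) ^ 2 + 4 * a * x ^ 3 * y +
      2 * (3 * b + 1) * x ^ 2 * y ^ 2 + 4 * c * x * y ^ 3 := by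
    unfold form
    ring
  rw [hform]
  positivity

namespace Splitting

variable {a b c P Q w v : ℝ}

theorem form_eq (h : Splitting a b c P Q w v) (x y : ℝ) :
    form 1 a b c 1 x y =
      (v * x ^ 2 + 2 * P * x * y + w * y ^ 2) * (w * x ^ 2 + 2 * Q * x * y + v * y ^ 2) := by
  obtain ⟨-, -, hwv, -, rfl, rfl, rfl⟩ := h
  unfold form
  linear_combination -(x ^ 4 + y ^ 4) * hwv

theorem two_mul_add (h : Splitting a b c P Q w v) : 2 * (a + c) = (P + Q) * (w + v) := by
  linear_combination 2 * h.a_eq + 2 * h.c_eq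

theorem four_mul_add_two_sub_sq (h : Splitting a b c P Q w v) :
    4 * (6 * b + 2 - (a - c) ^ 2) = (4 - (P - Q) ^ 2) * (w - v) ^ 2 + 16 * (P * Q + 1) := by
  obtain ⟨-, -, hwv, -, rfl, rfl, rfl⟩ := h
  linear_combination 8 * hwv

theorem four_mul_add_sq_sub (h : Splitting a b c P Q w v) :
    4 * ((a + c) ^ 2 - (6 * b - 2)) =
      ((P + Q) ^ 2 - 4) * (w - v) ^ 2 + 4 * (P - Q) ^ 2 := by
  obtain ⟨-, -, hwv, -, rfl, rfl, rfl⟩ := h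
  linear_combination (4 * (P + Q) ^ 2 - 8) * hwv

theorem discr_eq (h : Splitting a b c P Q w v) :
    16 * discr 1 a b c 1 = (P ^ 2 - 1) * (Q ^ 2 - 1) *
      ((v ^ 2 + w ^ 2 - 2 * P * Q) ^ 2 - 4 * ((P ^ 2 - 1) * (Q ^ 2 - 1))) ^ 2 := by
  obtain ⟨-, -, hwv, -, rfl, rfl, rfl⟩ := h
  have hvw : v * w = 1 := mul_comm w v ▸ hwv
  simpa only [hwv, hvw, ← sq] using discr_mul v P w w Q v

theorem discr_nonneg_iff (h : Splitting a b c P Q w v) :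
    0 ≤ discr 1 a b c 1 ↔ 0 ≤ (P ^ 2 - 1) * (Q ^ 2 - 1) := by
  have hdiscr := h.discr_eq
  constructor
  · contrapose!
    intro hneg
    have hres : 0 < (v ^ 2 + w ^ 2 - 2 * P * Q) ^ 2 - 4 * ((P ^ 2 - 1) * (Q ^ 2 - 1)) := by
      linarith [sq_nonneg (v ^ 2 + w ^ 2 - 2 * P * Q)]
    linarith [mul_neg_of_neg_of_pos hneg (pow_pos hres 2)]
  · intro hnonneg
    linarith [mul_nonneg hnonneg
      (sq_nonneg ((v ^ 2 + w ^ 2 - 2 * P * Q) ^ 2 - 4 * ((P ^ 2 - 1) * (Q ^ 2 - 1))))]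

theorem discr_nonpos (h : Splitting a b c P Q w v) (hPQ : (P ^ 2 - 1) * (Q ^ 2 - 1) ≤ 0) :
    discr 1 a b c 1 ≤ 0 := by
  linarith [h.discr_eq, mul_nonpos_of_nonpos_of_nonneg hPQ
    (sq_nonneg ((v ^ 2 + w ^ 2 - 2 * P * Q) ^ 2 - 4 * ((P ^ 2 - 1) * (Q ^ 2 - 1))))]

theorem discr_pos (h : Splitting a b c P Q w v) (hP : P < -1) (hQ : 1 < Q) :
    0 < discr 1 a b c 1 := by
  have hprod : 0 < (P ^ 2 - 1) * (Q ^ 2 - 1) := mul_pos (by nlinarith) (by nlinarith)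
  have hsq : 2 ≤ v ^ 2 + w ^ 2 := by linarith [sq_nonneg (w - v), h.mul_eq_one]
  have hres : 0 < (v ^ 2 + w ^ 2 - 2 * P * Q) ^ 2 - 4 * ((P ^ 2 - 1) * (Q ^ 2 - 1)) :=
    calc
      0 < (2 * (P - Q)) ^ 2 := by nlinarith
      _ = (2 - 2 * P * Q) ^ 2 - 4 * ((P ^ 2 - 1) * (Q ^ 2 - 1)) := by ring
      _ ≤ _ := by
        gcongr
        nlinarith
  linarith [h.discr_eq, mul_pos hprod (pow_pos hres 2)]

theorem two_le_add (h : Splitting a b c P Q w v) : 2 ≤ w + v := by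
  nlinarith [sq_nonneg (w - v), h.mul_eq_one, h.w_pos, h.v_pos]

theorem add_pos_iff (h : Splitting a b c P Q w v) : 0 < a + c ↔ 0 < P + Q := by
  rw [← mul_pos_iff_of_pos_left two_pos, h.two_mul_add,
    mul_pos_iff_of_pos_right (add_pos h.w_pos h.v_pos)]

theorem add_le_neg_two (h : Splitting a b c P Q w v) (hPQ : P + Q ≤ -2) : a + c ≤ -2 := by
  nlinarith [h.two_mul_add, h.two_le_add]

theorem sub_sq_le (h : Splitting a b c P Q w v) (hsub : (P - Q) ^ 2 ≤ 4) (hmul : -1 ≤ P * Q) :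
    (a - c) ^ 2 ≤ 6 * b + 2 := by
  linarith [h.four_mul_add_two_sub_sq, mul_nonneg (sub_nonneg.2 hsub) (sq_nonneg (w - v))]

theorem lt_sub_sq (h : Splitting a b c P Q w v) (hP : P < -1) (hQ : 1 ≤ Q) :
    6 * b + 2 < (a - c) ^ 2 := by
  have hsub : 0 ≤ (P - Q) ^ 2 - 4 := by nlinarith
  nlinarith [h.four_mul_add_two_sub_sq, mul_nonneg hsub (sq_nonneg (w - v))]

theorem one_lt_of_one_lt_mul (h : Splitting a b c P Q w v) (hPQ : 1 < P * Q) : 1 < b := by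
  linarith [h.b_eq, h.mul_eq_one, sq_nonneg (w - v)]

theorem eq_of_add_sq_le (h : Splitting a b c P Q w v) (hPQ : P + Q < -2)
    (hac : (a + c) ^ 2 ≤ 6 * b - 2) : P = Q ∧ w = v := by
  have hadd : 0 < (P + Q) ^ 2 - 4 := by nlinarith
  have hw := mul_nonneg hadd.le (sq_nonneg (w - v))
  have heq := h.four_mul_add_sq_sub
  constructor
  · exact sub_eq_zero.1 (sq_nonpos_iff _ |>.1 (by linarith))
  · have : ((P + Q) ^ 2 - 4) * (w - v) ^ 2 ≤ 0 := by linarith [sq_nonneg (P - Q)]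
    exact sub_eq_zero.1 (sq_nonpos_iff _ |>.1 (nonpos_of_mul_nonpos_right this hadd))

theorem isCopositive_of_neg_one_le (h : Splitting a b c P Q w v) (hP : -1 ≤ P) :
    IsCopositive 1 a b c 1 := fun x y hx hy => by
  rw [h.form_eq]
  exact mul_nonneg (quadratic_nonneg h.v_pos (mul_comm w v ▸ h.mul_eq_one) hP hx hy)
    (quadratic_nonneg h.w_pos h.mul_eq_one (hP.trans h.le) hx hy)

theorem isCopositive_of_eq (h : Splitting a b c P P w w) : IsCopositive 1 a b c 1 := by
  intro x y _ _
  rw [h.form_eq]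
  exact mul_self_nonneg _

theorem le_neg_one_of_isCopositive (h : Splitting a b c P Q w v) (hcop : IsCopositive 1 a b c 1)
    (hP : P < -1) : Q ≤ -1 := by
  by_contra! hQ
  have hx : 0 < -P * w := mul_pos (by linarith) h.w_pos
  have hneg : v * (-P * w) ^ 2 + 2 * P * (-P * w) * 1 + w * 1 ^ 2 < 0 := by
    have : v * (-P * w) ^ 2 + 2 * P * (-P * w) * 1 + w * 1 ^ 2 = w * (1 - P ^ 2) := by
      linear_combination P ^ 2 * w * h.mul_eq_one
    rw [this]
    exact mul_neg_of_pos_of_neg h.w_pos (by nlinarith)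
  have hpos := quadratic_pos h.w_pos h.mul_eq_one hQ hx one_pos
  have hform := hcop _ 1 hx.le zero_le_one
  rw [h.form_eq] at hform
  exact hform.not_gt (mul_neg_of_neg_of_pos hneg hpos)

theorem isCopositive_iff (h : Splitting a b c P Q w v) :
    IsCopositive 1 a b c 1 ↔ -1 ≤ P ∨ (P = Q ∧ w = v) := by
  constructor
  · intro hcop
    refine or_iff_not_imp_left.2 fun hP => ?_
    have hQ := h.le_neg_one_of_isCopositive hcop (not_le.1 hP)
    exact h.eq_of_add_sq_le (by linarith)
      (hcop.add_sq_le (h.add_le_neg_two (by linarith)))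
  · rintro (hP | ⟨rfl, rfl⟩)
    · exact h.isCopositive_of_neg_one_le hP
    · exact h.isCopositive_of_eq

end Splitting

/-- The condition of the copositivity theorem, a disjunction of three cases, as a predicate of the
entries of the tensor. -/
def Criterion (a₀ a₁ a₂ a₃ a₄ : ℝ) : Prop :=
  (discr a₀ a₁ a₂ a₃ a₄ ≤ 0 ∧ 0 < a₃ * √a₀ + a₁ * √a₄) ∨
  (0 ≤ a₃ ∧ 0 ≤ a₁ ∧ 0 ≤ 3 * a₂ + √(a₀ * a₄)) ∨
  (0 ≤ discr a₀ a₁ a₂ a₃ a₄ ∧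
    |a₁ * √a₄ - a₃ * √a₀| ≤ √(6 * a₀ * a₂ * a₄ + 2 * a₀ * a₄ * √(a₀ * a₄)) ∧
    ((-√(a₀ * a₄) ≤ 3 * a₂ ∧ 3 * a₂ ≤ 3 * √(a₀ * a₄)) ∨
      (√(a₀ * a₄) < a₂ ∧
        -√(6 * a₀ * a₂ * a₄ - 2 * a₀ * a₄ * √(a₀ * a₄)) ≤ a₁ * √a₄ + a₃ * √a₀)))

section Scaling

variable {R : Type*} [Ring R] [LinearOrder R] [IsStrictOrderedRing R] {k x y x' y' : R}

theorem le_iff_le_of_eq_mul (hk : 0 < k) (hx : x' = k * x) (hy : y' = k * y) :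
    x' ≤ y' ↔ x ≤ y := by
  rw [hx, hy, mul_le_mul_iff_right₀ hk]

theorem lt_iff_lt_of_eq_mul (hk : 0 < k) (hx : x' = k * x) (hy : y' = k * y) :
    x' < y' ↔ x < y := by
  rw [hx, hy, mul_lt_mul_iff_right₀ hk]

theorem abs_eq_mul_abs (hk : 0 ≤ k) (hx : x' = k * x) : |x'| = k * |x| := by
  rw [hx, abs_mul, abs_of_nonneg hk]

theorem sqrt_eq_mul_sqrt {k x x' : ℝ} (hk : 0 ≤ k) (hx : x' = k ^ 2 * x) : √x' = k * √x := by
  rw [hx, Real.sqrt_mul (sq_nonneg k), Real.sqrt_sq hk]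

variable {s u : ℝ} {a₀ a₁ a₂ a₃ a₄ : ℝ}

theorem isCopositive_scale_iff (hs : 0 < s) (hu : 0 < u) :
    IsCopositive (s ^ 4 * a₀) (s ^ 3 * u * a₁) (s ^ 2 * u ^ 2 * a₂) (s * u ^ 3 * a₃)
      (u ^ 4 * a₄) ↔ IsCopositive a₀ a₁ a₂ a₃ a₄ := by
  unfold IsCopositive
  simp only [form_scale]
  refine ⟨fun h x y hx hy => ?_, fun h x y hx hy => h _ _ (by positivity) (by positivity)⟩
  simpa only [mul_div_cancel₀ _ hs.ne', mul_div_cancel₀ _ hu.ne'] using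
    h (x / s) (y / u) (by positivity) (by positivity)

theorem criterion_scale_iff (hs : 0 < s) (hu : 0 < u) :
    Criterion (s ^ 4 * a₀) (s ^ 3 * u * a₁) (s ^ 2 * u ^ 2 * a₂) (s * u ^ 3 * a₃)
      (u ^ 4 * a₄) ↔ Criterion a₀ a₁ a₂ a₃ a₄ := by
  have hk2 : 0 < (s * u) ^ 2 := by positivity
  have hk3 : 0 < (s * u) ^ 3 := by positivity
  have hk12 : 0 < (s * u) ^ 12 := by positivity
  have hsqrt₀ : √(s ^ 4 * a₀) = s ^ 2 * √a₀ :=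
    sqrt_eq_mul_sqrt (by positivity) (by ring)
  have hsqrt₄ : √(u ^ 4 * a₄) = u ^ 2 * √a₄ :=
    sqrt_eq_mul_sqrt (by positivity) (by ring)
  have hsqrt₀₄ : √(s ^ 4 * a₀ * (u ^ 4 * a₄)) = (s * u) ^ 2 * √(a₀ * a₄) :=
    sqrt_eq_mul_sqrt hk2.le (by ring)
  have hsqrt_sub : √(6 * (s ^ 4 * a₀) * (s ^ 2 * u ^ 2 * a₂) * (u ^ 4 * a₄) -
      2 * (s ^ 4 * a₀) * (u ^ 4 * a₄) * ((s * u) ^ 2 * √(a₀ * a₄))) =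
        (s * u) ^ 3 * √(6 * a₀ * a₂ * a₄ - 2 * a₀ * a₄ * √(a₀ * a₄)) :=
    sqrt_eq_mul_sqrt hk3.le (by ring)
  unfold Criterion
  rw [discr_scale, hsqrt₀, hsqrt₄, hsqrt₀₄]
  refine or_congr (and_congr ?_ ?_) (or_congr (and_congr ?_ (and_congr ?_ ?_))
    (and_congr ?_ (and_congr ?_ (or_congr (and_congr ?_ ?_) (and_congr ?_ ?_)))))
  · exact le_iff_le_of_eq_mul hk12 rfl (by ring)
  · exact lt_iff_lt_of_eq_mul hk3 (by ring) (by ring)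
  · exact mul_nonneg_iff_of_pos_left (by positivity)
  · exact mul_nonneg_iff_of_pos_left (by positivity)
  · exact le_iff_le_of_eq_mul hk2 (by ring) (by ring)
  · exact mul_nonneg_iff_of_pos_left hk12
  · exact le_iff_le_of_eq_mul hk3 (abs_eq_mul_abs hk3.le (by ring))
      (sqrt_eq_mul_sqrt hk3.le (by ring))
  · exact le_iff_le_of_eq_mul hk2 (by ring) (by ring)
  · exact le_iff_le_of_eq_mul hk2 (by ring) (by ring)
  · exact lt_iff_lt_of_eq_mul hk2 rfl (by ring)
  · exact le_iff_le_of_eq_mul hk3 (by rw [hsqrt_sub, mul_neg]) (by ring)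

end Scaling

theorem criterion_one_iff {a b c : ℝ} :
    Criterion 1 a b c 1 ↔
      (discr 1 a b c 1 ≤ 0 ∧ 0 < a + c) ∨ (0 ≤ c ∧ 0 ≤ a ∧ 0 ≤ 3 * b + 1) ∨
      (0 ≤ discr 1 a b c 1 ∧ |a - c| ≤ √(6 * b + 2) ∧
        ((-1 ≤ 3 * b ∧ b ≤ 1) ∨ (1 < b ∧ -√(6 * b - 2) ≤ a + c))) := by
  simp [Criterion, add_comm c a]

namespace Splitting

variable {a b c P Q w v : ℝ}

theorem neg_one_le_of_discr_nonpos (h : Splitting a b c P Q w v) (hD : discr 1 a b c 1 ≤ 0)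
    (hac : 0 < a + c) : -1 ≤ P := by
  by_contra! hP
  have hPQ := h.add_pos_iff.1 hac
  exact hD.not_gt (h.discr_pos hP (by linarith))

theorem isCopositive_of_discr_nonneg (h : Splitting a b c P Q w v) (hD : 0 ≤ discr 1 a b c 1)
    (hsub : (a - c) ^ 2 ≤ 6 * b + 2) (hadd : 1 < b → -√(6 * b - 2) ≤ a + c) :
    IsCopositive 1 a b c 1 := by
  refine h.isCopositive_iff.2 (or_iff_not_imp_left.2 fun hP => ?_)
  rw [not_le] at hP
  have hQ : 1 ≤ Q ^ 2 := sub_nonneg.1 <|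
    nonneg_of_mul_nonneg_right (h.discr_nonneg_iff.1 hD) (by nlinarith)
  rcases le_abs'.1 ((one_le_sq_iff_one_le_abs Q).1 hQ) with hQ | hQ
  · have hb : 1 < b := h.one_lt_of_one_lt_mul (by nlinarith)
    have hac : a + c ≤ -2 := h.add_le_neg_two (by linarith)
    refine h.eq_of_add_sq_le (by linarith) ?_
    rw [← neg_sq, ← Real.le_sqrt (by linarith) (by linarith)]
    exact neg_le.1 (hadd hb)
  · exact absurd hsub (h.lt_sub_sq hP hQ).not_ge

theorem criterion_of_discr_nonneg (h : Splitting a b c P Q w v) (hcop : IsCopositive 1 a b c 1)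
    (hD : 0 ≤ (P ^ 2 - 1) * (Q ^ 2 - 1)) (hsub : (P - Q) ^ 2 ≤ 4) (hmul : -1 ≤ P * Q) :
    Criterion 1 a b c 1 := by
  have hac := h.sub_sq_le hsub hmul
  refine criterion_one_iff.2 (Or.inr (Or.inr
    ⟨h.discr_nonneg_iff.2 hD, Real.abs_le_sqrt hac, ?_⟩))
  rcases le_or_gt b 1 with hb | hb
  · exact Or.inl ⟨by linarith [sq_nonneg (a - c)], hb⟩
  · exact Or.inr ⟨hb, hcop.neg_sqrt_le_add hb⟩

theorem nonneg_of_nonneg (h : Splitting a b c P Q w v) (hP : 0 ≤ P) (hQ : 0 ≤ Q) :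
    0 ≤ a ∧ 0 ≤ b ∧ 0 ≤ c := by
  obtain ⟨hw, hv, -, -, rfl, rfl, rfl⟩ := h
  exact ⟨by positivity, by positivity, by positivity⟩

theorem criterion_of_isCopositive (h : Splitting a b c P Q w v)
    (hcop : IsCopositive 1 a b c 1) : Criterion 1 a b c 1 := by
  rcases h.isCopositive_iff.1 hcop with hP | ⟨rfl, -⟩
  · rcases le_or_gt Q 1 with hQ | hQ
    · have hPQ := h.le
      exact h.criterion_of_discr_nonneg hcop
        (mul_nonneg_of_nonpos_of_nonpos (by nlinarith) (by nlinarith)) (by nlinarith) (by nlinarith)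
    rcases le_or_gt P 1 with hP1 | hP1
    · refine criterion_one_iff.2 (Or.inl ⟨h.discr_nonpos ?_, h.add_pos_iff.2 (by linarith)⟩)
      exact mul_nonpos_of_nonpos_of_nonneg (by nlinarith) (by nlinarith)
    · obtain ⟨ha, hb, hc⟩ := h.nonneg_of_nonneg (by linarith) (by linarith)
      exact criterion_one_iff.2 (Or.inr (Or.inl ⟨hc, ha, by linarith⟩))
  · exact h.criterion_of_discr_nonneg hcop (mul_self_nonneg _) (by simp)
      (by linarith [mul_self_nonneg P])

theorem isCopositive_of_criterion (h : Splitting a b c P Q w v)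
    (hcrit : Criterion 1 a b c 1) : IsCopositive 1 a b c 1 := by
  rcases criterion_one_iff.1 hcrit with ⟨hD, hac⟩ | ⟨hc, ha, hb⟩ | ⟨hD, hsub, hb⟩
  · exact h.isCopositive_of_neg_one_le (h.neg_one_le_of_discr_nonpos hD hac)
  · exact isCopositive_of_nonneg ha hb hc
  · have hb0 : 0 ≤ 6 * b + 2 := by rcases hb with ⟨hb, -⟩ | ⟨hb, -⟩ <;> linarith
    rw [Real.le_sqrt (abs_nonneg _) hb0, sq_abs] at hsub
    refine h.isCopositive_of_discr_nonneg hD hsub fun hb1 => ?_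
    exact (hb.resolve_left fun hb => hb.2.not_gt hb1).2

end Splitting

theorem isCopositive_one_iff_criterion (a b c : ℝ) :
    IsCopositive 1 a b c 1 ↔ Criterion 1 a b c 1 := by
  obtain ⟨P, Q, w, v, h⟩ := exists_splitting a b c
  exact ⟨h.criterion_of_isCopositive, h.isCopositive_of_criterion⟩

theorem exists_pow_mul_eq_one {n : ℕ} (hn : n ≠ 0) {x : ℝ} (hx : 0 < x) :
    ∃ s, 0 < s ∧ s ^ n * x = 1 :=
  ⟨x⁻¹ ^ (n⁻¹ : ℝ), by positivity, by
    rw [Real.rpow_inv_natCast_pow (by positivity) hn, inv_mul_cancel₀ hx.ne']⟩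

end BinaryQuartic

open BinaryQuartic

/-- Necessary and sufficient condition for copositivity of a 4th order 2-dimensional
symmetric tensor with `a₁₁₁₁ > 0`, `a₂₂₂₂ > 0`. -/
theorem copositive_iff_4th_2dim (a1111 a1112 a1122 a1222 a2222 I J : ℝ)
    (h1 : 0 < a1111) (h2 : 0 < a2222)
    (hI : I = a1111 * a2222 - 4 * a1112 * a1222 + 3 * a1122 ^ 2)
    (hJ : J = a1111 * a1122 * a2222 + 2 * a1112 * a1122 * a1222 - a1122 ^ 3 -
      a1111 * a1222 ^ 2 - a1112 ^ 2 * a2222) :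
    (∀ x1 x2 : ℝ, 0 ≤ x1 → 0 ≤ x2 →
      0 ≤ a1111 * x1 ^ 4 + 4 * a1112 * x1 ^ 3 * x2 + 6 * a1122 * x1 ^ 2 * x2 ^ 2 +
        4 * a1222 * x1 * x2 ^ 3 + a2222 * x2 ^ 4) ↔
      ((I ^ 3 - 27 * J ^ 2 ≤ 0 ∧
          0 < a1222 * Real.sqrt a1111 + a1112 * Real.sqrt a2222) ∨
       (0 ≤ a1222 ∧ 0 ≤ a1112 ∧ 0 ≤ 3 * a1122 + Real.sqrt (a1111 * a2222)) ∨
       (0 ≤ I ^ 3 - 27 * J ^ 2 ∧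
        |a1112 * Real.sqrt a2222 - a1222 * Real.sqrt a1111| ≤
          Real.sqrt (6 * a1111 * a1122 * a2222 +
            2 * a1111 * a2222 * Real.sqrt (a1111 * a2222)) ∧
        ((-Real.sqrt (a1111 * a2222) ≤ 3 * a1122 ∧
            3 * a1122 ≤ 3 * Real.sqrt (a1111 * a2222)) ∨
         (Real.sqrt (a1111 * a2222) < a1122 ∧
            -Real.sqrt (6 * a1111 * a1122 * a2222 -
                2 * a1111 * a2222 * Real.sqrt (a1111 * a2222)) ≤
              a1112 * Real.sqrt a2222 + a1222 * Real.sqrt a1111)))) := by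
  obtain ⟨s, hs, hs1⟩ := exists_pow_mul_eq_one four_ne_zero h1
  obtain ⟨u, hu, hu1⟩ := exists_pow_mul_eq_one four_ne_zero h2
  subst hI hJ
  change IsCopositive a1111 a1112 a1122 a1222 a2222 ↔ Criterion a1111 a1112 a1122 a1222 a2222
  rw [← isCopositive_scale_iff hs hu, ← criterion_scale_iff hs hu, hs1, hu1]
  exact isCopositive_one_iff_criterion _ _ _
end
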